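/- There exists an infinite word of quadratic subword complexity that does not belong to 𝓦_3: the word u = ∏_{k=1}^∞ a b^k over {a,b} satisfies p_u(n) = Θ(n²), and there do not exist languages S_1, S_2, S_3 with p_{S_i}(n) = O(1) for each i such that every factor of u belongs to S_1·S_2·S_3. -/

import Mathlib

/-! Let `posA k = k (k + 3) / 2` be the position of the `k`-th letter `a` of `u`. The gaps between
consecutive `a`s are pairwise distinct, so a factor with at least two `a`s occurs in `u` only once
(`seg_start_unique`). Hence the complexity is governed by the number of starting positions from which
a window of length `n` sees two `a`s, which is of order `n²`.

For the second part, fix `r` and `N` and put `M = N / (6 r)`. There are `M³` occurrences of words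
`b^i a b^(k+1) a b^(k+2) ⋯ a b^(k+r) a b^j` with `M ≤ k < 2 M` and `i, j < M`, all of length at most
`N`. In a decomposition `x y z` of such a word, either `x` or `z` has two `a`s and then this piece and
the total length determine the occurrence (only `O(N²)` of them arise so), or `y` contains all but at
most two of the `a`s, `|x|, |z| < 4 M`, and the occurrence is determined by `y, |x|, |z|`. So `S₂`
contains at least about `M / 16`, i.e. of order `N / r`, words of length at most `N` with between
`r - 1` and `r + 1` letters `a` (`cube_le`). For `r = 3, 6, 9, …` these sets of words are disjoint, and
as the harmonic series diverges, their total number exceeds every multiple of `N`, whereas `S₂` has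
only `O(N)` words of length at most `N`. -/

/-- The factor of the infinite word `u` of length `n` starting at position `i`. -/
def wordSeg {α : Type*} (u : ℕ → α) (i n : ℕ) : List α :=
  (List.range n).map (fun t => u (i + t))

/-- The set of (finite) factors of the infinite word `u`. -/
def Factors {α : Type*} (u : ℕ → α) : Set (List α) :=
  {w | ∃ i, w = wordSeg u i w.length}

/-- Subword complexity: the number of distinct factors of `u` of length `n`. -/
noncomputable def complexity {α : Type*} (u : ℕ → α) (n : ℕ) : ℕ :=
  {w : List α | w.length = n ∧ w ∈ Factors u}.ncard

/-- `p_L(n)`: the number of words of length `n` in the language `L`. -/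
noncomputable def langComplexity {α : Type*} (L : Set (List α)) (n : ℕ) : ℕ :=
  {w ∈ L | w.length = n}.ncard

/-- The infinite word `u = ∏_{k=1}^∞ a b^k = a b a b² a b³ ⋯` over `{a, b}`, with
`true = a` and `false = b`. -/
def uAB (n : ℕ) : Bool := decide (∃ k ≤ n, 2 * n = k * (k + 3))

/-! ### Occurrences of the letter `a` -/

/-- The position of the `k`-th letter `a` (counted from `0`) of `u`. -/
def posA : ℕ → ℕ
  | 0 => 0
  | k + 1 => posA k + k + 2

lemma two_mul_posA (k : ℕ) : 2 * posA k = k * (k + 3) := by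
  induction k with
  | zero => rfl
  | succ k ih => simp only [posA]; linarith

lemma le_posA (k : ℕ) : k ≤ posA k := by
  induction k with
  | zero => simp
  | succ k ih => simp only [posA]; omega

lemma posA_strictMono : StrictMono posA :=
  strictMono_nat_of_lt_succ fun k => by simp only [posA]; omega

lemma uAB_iff (n : ℕ) : uAB n = true ↔ ∃ k, n = posA k := by
  simp only [uAB, decide_eq_true_eq]
  constructor
  · rintro ⟨k, -, h⟩
    exact ⟨k, by have := two_mul_posA k; omega⟩
  · rintro ⟨k, rfl⟩
    exact ⟨k, le_posA k, two_mul_posA k⟩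

/-- The number of letters `a` of `u` before position `n`, encoded as the least `k` with
`n ≤ posA k`. -/
def cntA (n : ℕ) : ℕ := Nat.find (⟨n, le_posA n⟩ : ∃ k, n ≤ posA k)

lemma cntA_le_iff (n k : ℕ) : cntA n ≤ k ↔ n ≤ posA k := by
  rw [cntA, Nat.find_le_iff]
  exact ⟨fun ⟨m, hm, h⟩ => h.trans (posA_strictMono.monotone hm), fun h => ⟨k, le_rfl, h⟩⟩

lemma cntA_mono {m n : ℕ} (h : m ≤ n) : cntA m ≤ cntA n :=
  (cntA_le_iff _ _).2 (h.trans ((cntA_le_iff n _).1 le_rfl))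

lemma lt_cntA_iff (n k : ℕ) : k < cntA n ↔ posA k < n := by
  rw [← not_le, cntA_le_iff, not_le]

lemma cntA_succ (n : ℕ) : cntA (n + 1) = cntA n + if uAB n = true then 1 else 0 := by
  split_ifs with h
  · obtain ⟨k, rfl⟩ := (uAB_iff n).1 h
    have h1 : cntA (posA k) ≤ k := (cntA_le_iff _ _).2 le_rfl
    have h2 : k < cntA (posA k + 1) := (lt_cntA_iff _ _).2 (by omega)
    have h3 : cntA (posA k + 1) ≤ k + 1 := (cntA_le_iff _ _).2 (by simp only [posA]; omega)
    have h4 : k ≤ cntA (posA k) := by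
      by_contra hlt
      have := (cntA_le_iff (posA k) (cntA (posA k))).1 le_rfl
      have := posA_strictMono (not_le.1 hlt)
      omega
    omega
  · have h1 := (cntA_le_iff n (cntA n)).1 le_rfl
    have h2 : n ≠ posA (cntA n) := fun e => h ((uAB_iff n).2 ⟨_, e⟩)
    have h3 : cntA (n + 1) ≤ cntA n := (cntA_le_iff _ _).2 (by omega)
    have := cntA_mono (Nat.le_succ n)
    simp only [Nat.succ_eq_add_one] at this
    omega

lemma wordSeg_length {α : Type*} (u : ℕ → α) (i n : ℕ) : (wordSeg u i n).length = n := by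
  simp [wordSeg]

lemma wordSeg_add {α : Type*} (u : ℕ → α) (i m n : ℕ) :
    wordSeg u i (m + n) = wordSeg u i m ++ wordSeg u (i + m) n := by
  simp [wordSeg, List.range_add, Function.comp_def, add_assoc]

lemma count_wordSeg (p n : ℕ) : (wordSeg uAB p n).count true + cntA p = cntA (p + n) := by
  induction n with
  | zero => simp [wordSeg]
  | succ n ih =>
    rw [wordSeg_add, List.count_append, ← add_assoc, cntA_succ, ← ih]
    cases h : uAB (p + n) <;> simp [wordSeg, h]
    omega

lemma wordSeg_eq_iff {α : Type*} (u : ℕ → α) (p q n : ℕ) :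
    wordSeg u p n = wordSeg u q n ↔ ∀ t < n, u (p + t) = u (q + t) := by
  simp [wordSeg]

/-- The window seen from `p` has two `a`s only if it contains the `a`s number `cntA p` and
`cntA p + 1`; the distance between them identifies `cntA p`. -/
lemma seg_start_unique {p q n : ℕ} (h : wordSeg uAB p n = wordSeg uAB q n)
    (h2 : 2 ≤ (wordSeg uAB p n).count true) : p = q := by
  have ceq : ∀ t ≤ n, (wordSeg uAB p t).count true = (wordSeg uAB q t).count true := by
    intro t ht
    have : wordSeg uAB p t = wordSeg uAB q t := by
      rw [wordSeg_eq_iff] at h ⊢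
      exact fun s hs => h s (by omega)
    rw [this]
  -- For `s = 0, 1` the `s`-th `a` of the second window comes no later than that of the first;
  -- by symmetry the offsets agree.
  have key : ∀ a b : ℕ, (∀ t ≤ n, (wordSeg uAB a t).count true = (wordSeg uAB b t).count true) →
      2 ≤ (wordSeg uAB a n).count true → ∀ s < 2,
      posA (cntA b + s) - b ≤ posA (cntA a + s) - a := by
    intro a b hab h2 s hs
    have hn := count_wordSeg a n
    have h1 : posA (cntA a + s) < a + n := (lt_cntA_iff _ _).1 (by omega)
    have h0 : a ≤ posA (cntA a + s) := (cntA_le_iff _ _).1 (by omega)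
    have e := hab (posA (cntA a + s) - a + 1) (by omega)
    have e1 := count_wordSeg a (posA (cntA a + s) - a + 1)
    have e2 := count_wordSeg b (posA (cntA a + s) - a + 1)
    have e3 : cntA a + s < cntA (a + (posA (cntA a + s) - a + 1)) :=
      (lt_cntA_iff _ _).2 (by omega)
    have e4 := (lt_cntA_iff (b + (posA (cntA a + s) - a + 1)) (cntA b + s)).1 (by omega)
    omega
  have a0 := key p q ceq h2 0 (by omega)
  have a1 := key p q ceq h2 1 (by omega)
  have b0 := key q p (fun t ht => (ceq t ht).symm) (h ▸ h2) 0 (by omega)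
  have b1 := key q p (fun t ht => (ceq t ht).symm) (h ▸ h2) 1 (by omega)
  have hp := (cntA_le_iff p (cntA p)).1 le_rfl
  have hq := (cntA_le_iff q (cntA q)).1 le_rfl
  simp only [posA, add_zero] at a0 a1 b0 b1
  have : cntA p = cntA q := by omega
  rw [this] at a0 b0 hp
  omega

/-! ### Quadratic complexity -/

lemma mem_factors_iff {α : Type*} (u : ℕ → α) (w : List α) (n : ℕ) :
    (w.length = n ∧ w ∈ Factors u) ↔ ∃ p, w = wordSeg u p n := by
  constructor
  · rintro ⟨rfl, p, h⟩
    exact ⟨p, h⟩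
  · rintro ⟨p, rfl⟩
    exact ⟨wordSeg_length _ _ _, p, by rw [wordSeg_length]⟩

/-- A window of length at least `2 K + 3` starting before the `K`-th `a` sees two `a`s, so distinct starting
positions give distinct factors. -/
lemma complexity_lower (n K : ℕ) (h : 2 * K + 3 ≤ n) : posA K ≤ complexity uAB n := by
  have hfin : {w : List Bool | w.length = n ∧ w ∈ Factors uAB}.Finite :=
    (List.finite_length_eq Bool n).subset fun w hw => hw.1
  have hinj : Set.InjOn (fun p => wordSeg uAB p n) (Finset.range (posA K) : Set ℕ) := by
    intro p hp q _ hpq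
    refine seg_start_unique hpq ?_
    simp only [Finset.coe_range, Set.mem_Iio] at hp
    have hc := count_wordSeg p n
    have h1 : cntA p ≤ K := (cntA_le_iff _ _).2 hp.le
    have h2 : posA (cntA p + 1) < p + n := by
      rcases Nat.eq_zero_or_pos (cntA p) with h0 | h0
      · rw [h0]; simp only [posA]; omega
      · obtain ⟨c, hc⟩ := Nat.exists_eq_add_of_lt h0
        have := (lt_cntA_iff p c).1 (by omega)
        rw [hc, zero_add]
        simp only [posA]
        omega
    have := (lt_cntA_iff _ _).2 h2
    omega
  have := Set.ncard_le_ncard (s := (fun p => wordSeg uAB p n) '' (Finset.range (posA K) : Set ℕ))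
    (fun w hw => by
      obtain ⟨p, -, rfl⟩ := hw
      exact (mem_factors_iff _ _ _).2 ⟨p, rfl⟩) hfin
  rw [Set.InjOn.ncard_image hinj, Set.ncard_coe_finset, Finset.card_range] at this
  exact this

/-- From position `posA n` on, gaps between `a`s exceed `n`, so a window of length `n` has at most one
`a` and is determined by its offset. -/
lemma complexity_upper (n : ℕ) : complexity uAB n ≤ posA n + (n + 1) := by
  classical
  have hsub : {w : List Bool | w.length = n ∧ w ∈ Factors uAB} ⊆
      (((Finset.range (posA n)).image (fun p => wordSeg uAB p n) ∪
        (Finset.range (n + 1)).image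
          (fun s => wordSeg (fun t => decide (t = s)) 0 n) : Finset (List Bool)) :
        Set (List Bool)) := by
    intro w hw
    obtain ⟨p, rfl⟩ := (mem_factors_iff _ _ _).1 hw
    simp only [Finset.coe_union, Finset.coe_image, Set.mem_union, Set.mem_image, Finset.coe_range,
      Set.mem_Iio]
    rcases lt_or_ge p (posA n) with hp | hp
    · exact Or.inl ⟨p, hp, rfl⟩
    · right
      have hcp := (cntA_le_iff p (cntA p)).1 le_rfl
      have hge : n ≤ cntA p := by
        by_contra hlt
        have := posA_strictMono (not_le.1 hlt)
        omega
      refine ⟨min n (posA (cntA p) - p), by omega, ?_⟩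
      simp only [wordSeg, zero_add]
      refine List.map_congr_left fun t ht => ?_
      have ht : t < n := List.mem_range.1 ht
      rw [Bool.eq_iff_iff, decide_eq_true_eq, uAB_iff]
      constructor
      · intro h
        refine ⟨cntA p, by omega⟩
      · rintro ⟨k, hk⟩
        have h1 : cntA p ≤ k := (cntA_le_iff _ _).2 (by omega)
        have h2 : k < cntA p + 1 := by
          by_contra hlt
          have := posA_strictMono.monotone (not_lt.1 hlt)
          simp only [posA] at this
          omega
        have : k = cntA p := by omega
        subst this
        omega
  have := Set.ncard_le_ncard hsub (Finset.finite_toSet _)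
  rw [Set.ncard_coe_finset] at this
  refine this.trans ((Finset.card_union_le _ _).trans (add_le_add ?_ ?_))
  · exact Finset.card_image_le.trans (by simp)
  · exact Finset.card_image_le.trans (by simp)

lemma complexity_bounds :
    ∃ c₁ c₂ : ℝ, 0 < c₁ ∧ 0 < c₂ ∧ ∃ N : ℕ, ∀ n : ℕ, N ≤ n →
        c₁ * (n : ℝ) ^ 2 ≤ (complexity uAB n : ℝ) ∧
        (complexity uAB n : ℝ) ≤ c₂ * (n : ℝ) ^ 2 := by
  refine ⟨1 / 32, 4, by norm_num, by norm_num, 8, fun n hn => ⟨?_, ?_⟩⟩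
  · obtain ⟨K, hK⟩ : ∃ K, K = (n - 3) / 2 := ⟨_, rfl⟩
    have h1 := complexity_lower n K (by omega)
    have h2 := two_mul_posA K
    have h3 : n ≤ 2 * K + 4 := by omega
    have h4 : 2 ≤ K := by omega
    have h5 : n ^ 2 ≤ 32 * complexity uAB n := by nlinarith
    have h6 : (n : ℝ) ^ 2 ≤ 32 * (complexity uAB n : ℝ) := by exact_mod_cast h5
    linarith
  · have h1 := complexity_upper n
    have h2 := two_mul_posA n
    have h5 : complexity uAB n ≤ 4 * n ^ 2 := by nlinarith
    exact_mod_cast h5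

/-! ### Counting decompositions into three pieces -/

/-- The code `(tag, w, s, t)` says how the window `(p, n)` of `u` is to be recovered from a piece `w`
with two `a`s: as a prefix (`tag = 0`) or suffix (`tag = 1`) of a window of length `s`, or as the
middle piece preceded by `s` and followed by `t` letters (`tag = 2`). -/
def Codes (p n : ℕ) (e : ℕ × List Bool × ℕ × ℕ) : Prop :=
  2 ≤ e.2.1.count true ∧
  ((e.1 = 0 ∧ e.2.1 = wordSeg uAB p e.2.1.length ∧ n = e.2.2.1) ∨
   (e.1 = 1 ∧ (∃ l, e.2.1 = wordSeg uAB (p + l) e.2.1.length ∧ n = l + e.2.1.length) ∧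
      n = e.2.2.1) ∨
   (e.1 = 2 ∧ e.2.1 = wordSeg uAB (p + e.2.2.1) e.2.1.length ∧
      n = e.2.2.1 + e.2.1.length + e.2.2.2))

lemma Codes.unique {p n p' n' : ℕ} {e : ℕ × List Bool × ℕ × ℕ} (h : Codes p n e)
    (h' : Codes p' n' e) : p = p' ∧ n = n' := by
  obtain ⟨tag, w, s, t⟩ := e
  obtain ⟨h2, h⟩ := h
  obtain ⟨-, h'⟩ := h'
  simp only at h2 h h'
  have key : ∀ a b, w = wordSeg uAB a w.length → w = wordSeg uAB b w.length → a = b :=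
    fun a b ha hb => seg_start_unique (ha.symm.trans hb) (ha ▸ h2)
  rcases h with ⟨ht, hw, hn⟩ | ⟨ht, ⟨l, hw, hl⟩, hn⟩ | ⟨ht, hw, hn⟩ <;>
  rcases h' with ⟨ht', hw', hn'⟩ | ⟨ht', ⟨l', hw', hl'⟩, hn'⟩ | ⟨ht', hw', hn'⟩ <;>
  first
  | omega
  | (have := key _ _ hw hw'; omega)

lemma posA_add_le (k r : ℕ) : posA (k + r) ≤ posA k + r * (k + r + 1) := by
  have h1 := two_mul_posA k
  have h2 := two_mul_posA (k + r)
  have h3 := Nat.le_mul_self r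
  nlinarith

/-- The counting step: `M³` windows of `u` with exactly `r + 1` letters `a`, and the three ways in which
a decomposition `x y z` determines such a window. -/
lemma cube_le (F₁ F₂ F₃ : Finset (List Bool)) (N M r : ℕ) (hr : 3 ≤ r) (hM : r ≤ M)
    (hN : 6 * r * M ≤ N)
    (hF : ∀ w ∈ Factors uAB, w.length ≤ N →
      ∃ x ∈ F₁, ∃ y ∈ F₂, ∃ z ∈ F₃, w = x ++ y ++ z) :
    M ^ 3 ≤ F₁.card * (N + 1) + F₃.card * (N + 1) +
      (F₂.filter (fun y => r - 1 ≤ y.count true ∧ y.count true ≤ r + 1)).card * (4 * M) ^ 2 := by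
  classical
  set F₂' := F₂.filter (fun y => r - 1 ≤ y.count true ∧ y.count true ≤ r + 1) with hF₂'
  let T : Finset (ℕ × List Bool × ℕ × ℕ) :=
    ({0} ×ˢ F₁ ×ˢ Finset.range (N + 1) ×ˢ {0}) ∪ ({1} ×ˢ F₃ ×ˢ Finset.range (N + 1) ×ˢ {0}) ∪
      ({2} ×ˢ F₂' ×ˢ Finset.range (4 * M) ×ˢ Finset.range (4 * M))
  -- The triple `(a, i, j)` stands for the window from `i` letters before the `(M + a)`-th `a`
  -- to `j` letters after the `(M + a + r)`-th.
  let X : Finset (ℕ × ℕ × ℕ) := Finset.range M ×ˢ Finset.range M ×ˢ Finset.range M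
  let st : ℕ × ℕ × ℕ → ℕ := fun d => posA (M + d.1) - d.2.1
  let len : ℕ × ℕ × ℕ → ℕ := fun d => posA (M + d.1 + r) + 1 + d.2.2 - st d
  have facts : ∀ d ∈ X, cntA (st d) = M + d.1 ∧ cntA (st d + len d) = M + d.1 + r + 1 ∧
      st d + d.2.1 = posA (M + d.1) ∧ st d + len d = posA (M + d.1 + r) + 1 + d.2.2 := by
    rintro ⟨a, i, j⟩ hd
    simp only [X, Finset.mem_product, Finset.mem_range] at hd
    obtain ⟨ha, hi, hj⟩ := hd
    have hk := le_posA (M + a)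
    have hmono : posA (M + a) ≤ posA (M + a + r) := posA_strictMono.monotone (by omega)
    have e1 : st (a, i, j) + i = posA (M + a) := by simp only [st]; omega
    have e2 : st (a, i, j) + len (a, i, j) = posA (M + a + r) + 1 + j := by
      simp only [len]
      have : st (a, i, j) ≤ posA (M + a) := by omega
      generalize st (a, i, j) = q at *
      omega
    refine ⟨?_, ?_, e1, e2⟩
    · apply le_antisymm ((cntA_le_iff _ _).2 (by simp only; omega))
      obtain ⟨c, hc⟩ := Nat.exists_eq_add_of_lt (show 0 < M + a by omega)
      have : c < cntA (st (a, i, j)) := by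
        rw [lt_cntA_iff]
        rw [hc, zero_add] at e1
        simp only [posA] at e1
        omega
      simp only
      omega
    · rw [e2]
      apply le_antisymm
      · rw [cntA_le_iff]; simp only [posA]; omega
      · exact (lt_cntA_iff _ _).2 (by simp only; omega)
  have hcode : ∀ d ∈ X, ∃ e ∈ T, Codes (st d) (len d) e := by
    intro d hd
    obtain ⟨c1, c2, e1, e2⟩ := facts d hd
    obtain ⟨a, i, j⟩ := d
    simp only [X, Finset.mem_product, Finset.mem_range] at hd
    obtain ⟨ha, hi, hj⟩ := hd
    simp only at c1 c2 e1 e2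
    generalize st (a, i, j) = p at *
    generalize len (a, i, j) = n at *
    have hnN : n ≤ N := by
      have := posA_add_le (M + a) r
      have : r * (M + a + r + 1) ≤ r * (3 * M) := Nat.mul_le_mul_left _ (by omega)
      have : 3 * M ≤ r * M := Nat.mul_le_mul_right _ hr
      have : 6 * r * M = r * (3 * M) + 3 * (r * M) := by ring
      omega
    obtain ⟨x, hx, y, hy, z, hz, hw⟩ := hF (wordSeg uAB p n)
      ⟨p, by rw [wordSeg_length]⟩ (by rwa [wordSeg_length])
    have hlen : n = x.length + y.length + z.length := by
      have := congrArg List.length hw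
      simpa [wordSeg_length, add_assoc] using this
    have hw' := hw
    rw [hlen, wordSeg_add, wordSeg_add] at hw'
    obtain ⟨hxy, hz'⟩ := List.append_inj hw' (by simp [wordSeg_length])
    obtain ⟨hx', hy'⟩ := List.append_inj hxy (by simp [wordSeg_length])
    have cx := count_wordSeg p x.length
    have cy := count_wordSeg (p + x.length) y.length
    have cz := count_wordSeg (p + (x.length + y.length)) z.length
    rw [hx'] at cx
    rw [hy'] at cy
    rw [hz', ← add_assoc] at cz
    rw [show p + x.length + y.length + z.length = p + n by omega] at cz
    by_cases hx2 : 2 ≤ x.count true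
    · refine ⟨(0, x, n, 0), ?_, hx2, Or.inl ⟨rfl, hx'.symm, rfl⟩⟩
      simp [T, hx]; omega
    by_cases hz2 : 2 ≤ z.count true
    · refine ⟨(1, z, n, 0), ?_, hz2, Or.inr (Or.inl ⟨rfl, ⟨_, hz'.symm, hlen⟩, rfl⟩)⟩
      simp [T, hz]; omega
    have hyc : r - 1 ≤ y.count true ∧ y.count true ≤ r + 1 := by omega
    have hxl : x.length < 4 * M := by
      have := (cntA_le_iff (p + x.length) (M + a + 1)).1 (by omega)
      simp only [posA] at this
      omega
    have hzl : z.length < 4 * M := by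
      obtain ⟨r, rfl⟩ : ∃ s, r = s + 1 := ⟨r - 1, by omega⟩
      have := (lt_cntA_iff (p + x.length + y.length) (M + a + r)).1 (by omega)
      rw [← add_assoc] at e2
      simp only [posA] at e2
      omega
    refine ⟨(2, y, x.length, z.length), ?_, by simp only; omega,
      Or.inr (Or.inr ⟨rfl, hy'.symm, hlen⟩)⟩
    simp [T, hF₂', hy]
    omega
  choose! g hgT hg using hcode
  have hinj : Set.InjOn g (X : Set (ℕ × ℕ × ℕ)) := by
    intro d hd d' hd' h
    have hd := Finset.mem_coe.1 hd
    have hd' := Finset.mem_coe.1 hd'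
    obtain ⟨hp, hn⟩ := (hg d hd).unique (h ▸ hg d' hd')
    obtain ⟨c1, c2, e1, e2⟩ := facts d hd
    obtain ⟨c1', c2', e1', e2'⟩ := facts d' hd'
    obtain ⟨a, i, j⟩ := d
    obtain ⟨a', i', j'⟩ := d'
    simp only at c1 c2 e1 e2 c1' c2' e1' e2'
    rw [hp] at c1 e1
    rw [hp, hn] at e2
    have : a = a' := by omega
    subst this
    simp only [Prod.mk.injEq, true_and]
    omega
  have hcard := Finset.card_le_card_of_injOn g hgT hinj
  have hX : X.card = M ^ 3 := by simp [X]; ring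
  have hT : T.card ≤ F₁.card * (N + 1) + F₃.card * (N + 1) + F₂'.card * (4 * M) ^ 2 := by
    refine (Finset.card_union_le _ _).trans (add_le_add ((Finset.card_union_le _ _).trans ?_) ?_)
    · simp
    · simp [sq]
  omega

lemma exists_finset (S : Set (List Bool)) (C N : ℕ) (h : ∀ n, langComplexity S n ≤ C) :
    ∃ F : Finset (List Bool), (∀ w, w ∈ F ↔ w ∈ S ∧ w.length ≤ N) ∧ F.card ≤ C * (N + 1) := by
  classical
  have hfin : ∀ n, {w ∈ S | w.length = n}.Finite := fun n =>
    (List.finite_length_eq Bool n).subset fun w hw => hw.2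
  refine ⟨(Finset.range (N + 1)).biUnion fun n => (hfin n).toFinset, fun w => ?_, ?_⟩
  · simp only [Finset.mem_biUnion, Finset.mem_range, Set.Finite.mem_toFinset, Set.mem_ofPred_eq]
    constructor
    · rintro ⟨n, hn, hw, rfl⟩
      exact ⟨hw, by omega⟩
    · rintro ⟨hw, hl⟩
      exact ⟨_, by omega, hw, rfl⟩
  · refine (Finset.card_biUnion_le_card_mul _ _ C fun n _ => ?_).trans (by simp [mul_comm])
    rw [← Set.ncard_eq_toFinset_card _ (hfin n)]
    exact h n

lemma no_decomposition (S₁ S₂ S₃ : Set (List Bool)) (C : ℕ)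
    (h₁ : ∀ n, langComplexity S₁ n ≤ C) (h₂ : ∀ n, langComplexity S₂ n ≤ C)
    (h₃ : ∀ n, langComplexity S₃ n ≤ C)
    (hS : ∀ w ∈ Factors uAB, ∃ x ∈ S₁, ∃ y ∈ S₂, ∃ z ∈ S₃, w = x ++ y ++ z) : False := by
  classical
  obtain ⟨T, hT⟩ : ∃ T : ℕ, (288 * C + 1 : ℝ) ≤ ∑ i ∈ Finset.range T, 1 / ((i : ℝ) + 1) :=
    (Real.tendsto_sum_range_one_div_nat_succ_atTop.eventually_ge_atTop _).exists
  -- `R` is divisible by every `t ≤ T`, and large enough to absorb the lower order terms.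
  obtain ⟨Q, hQ⟩ : ∃ Q, Q = 882 * C * T ^ 3 + 16 * C + 1 + 3 * T := ⟨_, rfl⟩
  obtain ⟨R, hR⟩ : ∃ R, R = T.factorial * Q := ⟨_, rfl⟩
  obtain ⟨F₁, hF₁, k₁⟩ := exists_finset S₁ C (18 * R) h₁
  obtain ⟨F₂, hF₂, k₂⟩ := exists_finset S₂ C (18 * R) h₂
  obtain ⟨F₃, hF₃, k₃⟩ := exists_finset S₃ C (18 * R) h₃
  have hF : ∀ w ∈ Factors uAB, w.length ≤ 18 * R →
      ∃ x ∈ F₁, ∃ y ∈ F₂, ∃ z ∈ F₃, w = x ++ y ++ z := by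
    intro w hw hl
    obtain ⟨x, hx, y, hy, z, hz, rfl⟩ := hS w hw
    simp only [List.length_append] at hl
    exact ⟨x, (hF₁ x).2 ⟨hx, by omega⟩, y, (hF₂ y).2 ⟨hy, by omega⟩, z,
      (hF₃ z).2 ⟨hz, by omega⟩, rfl⟩
  -- The words of `F₂` with about `3 t` letters `a`, where `t = i + 1`.
  let Y : ℕ → Finset (List Bool) := fun i =>
    F₂.filter (fun y => 3 * (i + 1) - 1 ≤ y.count true ∧ y.count true ≤ 3 * (i + 1) + 1)
  have hY : ∑ i ∈ Finset.range T, (Y i).card ≤ C * (18 * R + 1) := by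
    rw [← Finset.card_biUnion]
    · refine (Finset.card_le_card ?_).trans k₂
      exact Finset.biUnion_subset.2 fun i _ => Finset.filter_subset _ _
    · intro i _ j _ hij
      refine Finset.disjoint_left.2 ?_
      intro y hy hy'
      simp only [Y, Finset.mem_filter] at hy hy'
      omega
  have hstep : ∀ i ∈ Finset.range T,
      (R : ℝ) * (1 / ((i : ℝ) + 1)) ≤ 882 * C * T ^ 2 + 16 * (Y i).card := by
    intro i hi
    have hi := Finset.mem_range.1 hi
    obtain ⟨f, hf⟩ : (i + 1) ∣ T.factorial := Nat.dvd_factorial (by omega) (by omega)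
    obtain ⟨M, hM⟩ : ∃ M, M = f * Q := ⟨_, rfl⟩
    have hRM : R = (i + 1) * M := by rw [hR, hf, hM]; ring
    have hf0 : 1 ≤ f := by
      rcases Nat.eq_zero_or_pos f with h | h
      · rw [h, mul_zero] at hf; exact absurd hf (Nat.factorial_ne_zero T)
      · exact h
    have hQM : Q ≤ M := by rw [hM]; exact Nat.le_mul_of_pos_left _ hf0
    have hTQ : 3 * T + 1 ≤ Q := by rw [hQ]; omega
    have hc := cube_le F₁ F₂ F₃ (18 * R) M (3 * (i + 1)) (by omega) (by omega)
      (by rw [hRM]; apply le_of_eq; ring) hF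
    have hM0 : 0 < M := by omega
    have hY' : M ^ 3 ≤ F₁.card * (18 * R + 1) + F₃.card * (18 * R + 1) +
      (Y i).card * (4 * M) ^ 2 := hc
    have h18 : 18 * R + 1 ≤ 21 * (T * M) := by
      have : R ≤ T * M := by rw [hRM]; exact Nat.mul_le_mul_right _ (by omega)
      have : 1 ≤ T * M := Nat.mul_pos (by omega) hM0
      omega
    have hmain : M ^ 2 * M ≤ M ^ 2 * (882 * C * T ^ 2 + 16 * (Y i).card) := by
      have a1 : F₁.card * (18 * R + 1) ≤ C * (21 * (T * M)) * (21 * (T * M)) :=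
        Nat.mul_le_mul (k₁.trans (Nat.mul_le_mul_left _ h18)) h18
      have a3 : F₃.card * (18 * R + 1) ≤ C * (21 * (T * M)) * (21 * (T * M)) :=
        Nat.mul_le_mul (k₃.trans (Nat.mul_le_mul_left _ h18)) h18
      linarith
    have hfinal := Nat.le_of_mul_le_mul_left hmain (by positivity)
    have hR' : (R : ℝ) * (1 / ((i : ℝ) + 1)) = M := by
      rw [hRM]; push_cast; field_simp
    rw [hR']
    exact_mod_cast hfinal
  have hsum := Finset.sum_le_sum hstep
  rw [← Finset.mul_sum, Finset.sum_add_distrib] at hsum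
  simp only [Finset.sum_const, Finset.card_range, nsmul_eq_mul, ← Finset.mul_sum] at hsum
  have hYR : (∑ i ∈ Finset.range T, ((Y i).card : ℝ)) ≤ C * (18 * R + 1) := by exact_mod_cast hY
  have hlow : (R : ℝ) * (288 * C + 1) ≤ R * ∑ i ∈ Finset.range T, 1 / ((i : ℝ) + 1) :=
    mul_le_mul_of_nonneg_left hT (Nat.cast_nonneg _)
  have hQR : Q ≤ R := by rw [hR]; exact Nat.le_mul_of_pos_left _ (Nat.factorial_pos T)
  have hbig : (882 * C * T ^ 3 + 16 * C + 1 : ℝ) ≤ R := by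
    have : 882 * C * T ^ 3 + 16 * C + 1 ≤ R := by omega
    exact_mod_cast this
  linarith

/-- there is a word of quadratic complexity not in `𝓦₃`: the word
`u = ∏_{k=1}^∞ a b^k` satisfies `p_u(n) = Θ(n²)` and admits no decomposition
`Fac(u) ⊆ S₁·S₂·S₃` with `p_{Sᵢ}(n) = O(1)`. -/
theorem stmt16 :
    (∃ c₁ c₂ : ℝ, 0 < c₁ ∧ 0 < c₂ ∧ ∃ N : ℕ, ∀ n : ℕ, N ≤ n →
        c₁ * (n : ℝ) ^ 2 ≤ (complexity uAB n : ℝ) ∧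
        (complexity uAB n : ℝ) ≤ c₂ * (n : ℝ) ^ 2) ∧
    ¬ ∃ S₁ S₂ S₃ : Set (List Bool),
        (∃ C : ℕ, ∀ n, langComplexity S₁ n ≤ C) ∧
        (∃ C : ℕ, ∀ n, langComplexity S₂ n ≤ C) ∧
        (∃ C : ℕ, ∀ n, langComplexity S₃ n ≤ C) ∧
        (∀ w ∈ Factors uAB, ∃ x ∈ S₁, ∃ y ∈ S₂, ∃ z ∈ S₃, w = x ++ y ++ z) := by
  refine ⟨complexity_bounds, ?_⟩
  rintro ⟨S₁, S₂, S₃, ⟨C₁, h₁⟩, ⟨C₂, h₂⟩, ⟨C₃, h₃⟩, hS⟩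
  exact no_decomposition S₁ S₂ S₃ (C₁ + C₂ + C₃) (fun n => (h₁ n).trans (by omega))
    (fun n => (h₂ n).trans (by omega)) (fun n => (h₃ n).trans (by omega)) hS
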